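/- Let G be a WCFG and A a WFSA over the same alphabet Σ and the same commutative semiring W, and let G∩ be the generalized Bar-Hillel grammar. For any nonterminal triplet (q0, X, qm) of G∩ with X ∈ N ∪ Σ (so X ≠ S̄) and q0, qm ∈ Q, there is a bijection ψ from the set D_{G∩}((q0,X,qm)) of subderivations of G∩ rooted at (q0,X,qm) to the weighted join D_G(X) ⋈ D_A({q0,qm}) restricted to pairs ⟨t, π⟩ in which the subpath π does not end with an ε-arc; moreover for ψ(t∩) = ⟨t, π⟩ one has w(t∩) = w(t) ⊗ w̃(π) and yield(t∩) = yield(t) = yield(π). -/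

import Mathlib

/-!
Common definitions: weighted context-free grammars (WCFGs), weighted
finite-state automata (WFSAs), leftmost derivations, paths and subpaths,
and the (generalized and original) Bar-Hillel intersection constructions.
-/

/-- A weighted production rule `X → α / w`. -/
structure Rule (T N K : Type*) where
  lhs : N
  rhs : List (T ⊕ N)
  wt  : K

/-- A weighted context-free grammar over terminals `T`, nonterminals `N`
and weights `K`. -/
structure WCFG (T N K : Type*) where
  start : N
  rules : Set (Rule T N K)

/-- A leftmost rewrite step `α ⇒_L β` using rule `r`: the leftmost
nonterminal of `α` (everything to its left is terminal) is rewritten by `r`. -/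
def StepL {T N K : Type*} (G : WCFG T N K) (r : Rule T N K)
    (α β : List (T ⊕ N)) : Prop :=
  r ∈ G.rules ∧ ∃ (z : List T) (δ : List (T ⊕ N)),
    α = (z.map Sum.inl) ++ (Sum.inr r.lhs :: δ) ∧
    β = (z.map Sum.inl) ++ r.rhs ++ δ

/-- `DerivesL G α rs x`: starting from sentential form `α` and applying the
rules `rs` by leftmost rewriting one reaches the terminal string `x`. -/
inductive DerivesL {T N K : Type*} (G : WCFG T N K) :
    List (T ⊕ N) → List (Rule T N K) → List T → Prop
  | refl (x : List T) : DerivesL G (x.map Sum.inl) [] x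
  | step {α β : List (T ⊕ N)} {r : Rule T N K} {rs : List (Rule T N K)}
      {x : List T} :
      StepL G r α β → DerivesL G β rs x → DerivesL G α (r :: rs) x

/-- A (sub)derivation of `G` starting from the sentential form `α`,
recorded as the sequence of applied rules together with its yield. -/
structure DerivFrom {T N K : Type*} (G : WCFG T N K) (α : List (T ⊕ N)) where
  rules : List (Rule T N K)
  yield : List T
  ok : DerivesL G α rules yield

/-- The weight of a derivation: the `⊗`-product of the weights of the
applied rules. -/
def DerivFrom.weight {T N K : Type*} [CommSemiring K] {G : WCFG T N K}
    {α : List (T ⊕ N)} (d : DerivFrom G α) : K :=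
  (d.rules.map Rule.wt).prod

/-- Derivations of `G` rooted at the nonterminal `X`.  (For `X = G.start`
these are exactly the derivations of `G`; note that at least one rule is
necessarily applied.) -/
abbrev Deriv {T N K : Type*} (G : WCFG T N K) (X : N) : Type _ :=
  DerivFrom G [Sum.inr X]

/-- A weighted arc `src --lab/wt--> dst`; `lab = none` represents an ε-arc. -/
structure Arc (T Q K : Type*) where
  src : Q
  lab : Option T
  wt  : K
  dst : Q

/-- A weighted finite-state automaton over terminals `T`, states `Q` and
weights `K`; `arcs` is a finite multiset of weighted arcs, and `init`/`final`
are the initial/final weight functions. -/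
structure WFSA (T Q K : Type*) where
  arcs : Multiset (Arc T Q K)
  init : Q → K
  final : Q → K

/-- `ChainFrom A p as q`: `as` is a sequence of arcs of `A` with matched
adjacent states, leading from state `p` to state `q`. -/
inductive ChainFrom {T Q K : Type*} (A : WFSA T Q K) :
    Q → List (Arc T Q K) → Q → Prop
  | nil (q : Q) : ChainFrom A q [] q
  | cons {a : Arc T Q K} {as : List (Arc T Q K)} {q : Q} :
      a ∈ A.arcs → ChainFrom A a.dst as q → ChainFrom A a.src (a :: as) q

/-- A subpath of `A` from state `p` to state `q` (possibly empty). -/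
structure SubPath {T Q K : Type*} (A : WFSA T Q K) (p q : Q) where
  arcs : List (Arc T Q K)
  ok : ChainFrom A p arcs q

/-- The yield of a subpath: the concatenation of its arc labels
(ε contributing nothing). -/
def SubPath.yield {T Q K : Type*} {A : WFSA T Q K} {p q : Q}
    (π : SubPath A p q) : List T :=
  π.arcs.filterMap Arc.lab

/-- The inner weight `w̃(π)` of a subpath: the `⊗`-product of its arc weights
(no initial/final weights; `1̄` if empty). -/
def SubPath.weight {T Q K : Type*} [CommSemiring K] {A : WFSA T Q K} {p q : Q}
    (π : SubPath A p q) : K :=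
  (π.arcs.map Arc.wt).prod

/-- An accepting path of `A`: a nonempty chained sequence of arcs starting at
an initial state (`init ≠ 0̄`) and ending at a final state (`final ≠ 0̄`). -/
structure FSAPath {T Q K : Type*} [Zero K] (A : WFSA T Q K) where
  src : Q
  dst : Q
  arcs : List (Arc T Q K)
  ne : arcs ≠ []
  chain : ChainFrom A src arcs dst
  src_init : A.init src ≠ 0
  dst_final : A.final dst ≠ 0

/-- The yield of a path: the concatenation of its arc labels. -/
def FSAPath.yield {T Q K : Type*} [Zero K] {A : WFSA T Q K} (π : FSAPath A) : List T :=
  π.arcs.filterMap Arc.lab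

/-- The weight of a path: `λ(q₀) ⊗ w₁ ⊗ ⋯ ⊗ w_N ⊗ ρ(q_N)`. -/
def FSAPath.weight {T Q K : Type*} [CommSemiring K] {A : WFSA T Q K}
    (π : FSAPath A) : K :=
  A.init π.src * (π.arcs.map Arc.wt).prod * A.final π.dst

/-- Middle symbols of Bar-Hillel triplet nonterminals: `N ∪ {S̄} ∪ Σ ∪ {ε}`. -/
inductive BHSym (T N : Type*) where
  | nt  : N → BHSym T N
  | bar : BHSym T N
  | term : T → BHSym T N
  | eps : BHSym T N

/-- Nonterminals of the Bar-Hillel grammar: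
`{S} ∪ Q × (N ∪ {S̄} ∪ Σ ∪ {ε}) × Q`. -/
inductive BHNT (T N Q : Type*) where
  | start : BHNT T N Q
  | trip : Q → BHSym T N → Q → BHNT T N Q

/-- View a grammar symbol (terminal or nonterminal) as a triplet middle
symbol. -/
def BHSym.ofSym {T N : Type*} : T ⊕ N → BHSym T N
  | Sum.inl a => BHSym.term a
  | Sum.inr X => BHSym.nt X

/-- View an arc label (`none` = ε) as a triplet middle symbol. -/
def BHSym.ofLab {T N : Type*} : Option T → BHSym T N
  | some a => BHSym.term a
  | none   => BHSym.eps

/-- The sentential form corresponding to the root symbol of a subderivation: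
a nonterminal root `X` gives `X`, a terminal root `a` gives `a`, and an
ε root gives the empty form. -/
def BHSym.form {T N : Type*} : BHSym T N → List (T ⊕ N)
  | BHSym.nt X => [Sum.inr X]
  | BHSym.term a => [Sum.inl a]
  | BHSym.eps => []
  | BHSym.bar => []

/-- Subderivations of `G` rooted at the symbol `s ∈ N ∪ Σ ∪ {ε}`:
for a nonterminal root at least one rule is applied; for a root in
`Σ ∪ {ε}` no rule is applied, the yield is the root symbol itself and the
weight is `1̄`. -/
abbrev SubDeriv {T N K : Type*} (G : WCFG T N K) (s : BHSym T N) : Type _ :=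
  DerivFrom G s.form

/-- `(q₀,X₁,q₁)(q₁,X₂,q₂)⋯(q_{M-1},X_M,q_M)` as a right-hand side of the
Bar-Hillel grammar, where the `Xᵢ` traverse `syms` and `q₁,…,q_M` traverse
`qs`. -/
def tripRHS {T N Q : Type*} : Q → List (T ⊕ N) → List Q → List (T ⊕ BHNT T N Q)
  | _, [], _ => []
  | _, _ :: _, [] => []
  | q0, s :: ss, q :: qs => Sum.inr (BHNT.trip q0 (BHSym.ofSym s) q) :: tripRHS q ss qs

section BarHillel

variable {T N Q K : Type*} [CommSemiring K]

/-- Rule schema (a): `S → (qI,S̄,qF) / λ(qI)⊗ρ(qF)` for `qI ∈ I`, `qF ∈ F`. -/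
def bhRulesStart (G : WCFG T N K) (A : WFSA T Q K) : Set (Rule T (BHNT T N Q) K) :=
  {r | ∃ qI qF : Q, A.init qI ≠ 0 ∧ A.final qF ≠ 0 ∧
    r = ⟨BHNT.start, [Sum.inr (BHNT.trip qI BHSym.bar qF)],
         A.init qI * A.final qF⟩}

/-- Rule schema (b): `(qI,S̄,q₁) → (qI,S̄,q₀)(q₀,ε,q₁) / 1̄` for `qI ∈ I`,
`q₀,q₁ ∈ Q`. -/
def bhRulesBar (G : WCFG T N K) (A : WFSA T Q K) : Set (Rule T (BHNT T N Q) K) :=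
  {r | ∃ qI q0 q1 : Q, A.init qI ≠ 0 ∧
    r = ⟨BHNT.trip qI BHSym.bar q1,
         [Sum.inr (BHNT.trip qI BHSym.bar q0), Sum.inr (BHNT.trip q0 BHSym.eps q1)],
         1⟩}

/-- Rule schema (c): `(qI,S̄,q₀) → (qI,S,q₀) / 1̄` for `qI ∈ I`, `q₀ ∈ Q`. -/
def bhRulesExit (G : WCFG T N K) (A : WFSA T Q K) : Set (Rule T (BHNT T N Q) K) :=
  {r | ∃ qI q0 : Q, A.init qI ≠ 0 ∧
    r = ⟨BHNT.trip qI BHSym.bar q0,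
         [Sum.inr (BHNT.trip qI (BHSym.nt G.start) q0)], 1⟩}

/-- Rule schema (d): `(q₀,X,q_M) → (q₀,X₁,q₁)⋯(q_{M-1},X_M,q_M) / w` for each
rule `X → X₁⋯X_M / w` of `G` with `M > 0` and all `q₀,…,q_M ∈ Q`. -/
def bhRulesCFG (G : WCFG T N K) (A : WFSA T Q K) : Set (Rule T (BHNT T N Q) K) :=
  {r | ∃ (r₀ : Rule T N K) (q0 : Q) (qs : List Q),
    r₀ ∈ G.rules ∧ r₀.rhs ≠ [] ∧ qs.length = r₀.rhs.length ∧
    r = ⟨BHNT.trip q0 (BHSym.nt r₀.lhs) (qs.getLastD q0),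
         tripRHS q0 r₀.rhs qs, r₀.wt⟩}

/-- Rule schema (e): `(q₀,X,q₀) → ε / w` for each rule `X → ε / w` of `G`
and `q₀ ∈ Q`. -/
def bhRulesNil (G : WCFG T N K) (A : WFSA T Q K) : Set (Rule T (BHNT T N Q) K) :=
  {r | ∃ (r₀ : Rule T N K) (q : Q), r₀ ∈ G.rules ∧ r₀.rhs = [] ∧
    r = ⟨BHNT.trip q (BHSym.nt r₀.lhs) q, [], r₀.wt⟩}

/-- Rule schema (f): `(q₀,a,q₁) → a / w` for each arc `q₀ --a/w--> q₁` of `A`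
with `a ∈ Σ ∪ {ε}`. -/
def bhRulesArc (G : WCFG T N K) (A : WFSA T Q K) : Set (Rule T (BHNT T N Q) K) :=
  {r | ∃ a : Arc T Q K, a ∈ A.arcs ∧
    r = ⟨BHNT.trip a.src (BHSym.ofLab a.lab) a.dst,
         a.lab.toList.map Sum.inl, a.wt⟩}

/-- Rule schema (g): `(q₀,a,q₂) → (q₀,ε,q₁)(q₁,a,q₂) / 1̄` for all `a ∈ Σ`
and `q₀,q₁,q₂ ∈ Q`. -/
def bhRulesArcEps (G : WCFG T N K) (A : WFSA T Q K) : Set (Rule T (BHNT T N Q) K) :=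
  {r | ∃ (t : T) (q0 q1 q2 : Q),
    r = ⟨BHNT.trip q0 (BHSym.term t) q2,
         [Sum.inr (BHNT.trip q0 BHSym.eps q1),
          Sum.inr (BHNT.trip q1 (BHSym.term t) q2)], 1⟩}

/-- The generalized Bar-Hillel intersection grammar `G∩` of a WCFG `G` and a
WFSA `A` (schemas (a)–(g)). -/
def BHGrammar (G : WCFG T N K) (A : WFSA T Q K) : WCFG T (BHNT T N Q) K :=
  ⟨BHNT.start,
    bhRulesStart G A ∪ bhRulesBar G A ∪ bhRulesExit G A ∪ bhRulesCFG G A ∪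
    bhRulesNil G A ∪ bhRulesArc G A ∪ bhRulesArcEps G A⟩

/-- Rule schema (a) of the original construction:
`S → (qI,S,qF) / λ(qI)⊗ρ(qF)` for `qI ∈ I`, `qF ∈ F`. -/
def obhRulesStart (G : WCFG T N K) (A : WFSA T Q K) : Set (Rule T (BHNT T N Q) K) :=
  {r | ∃ qI qF : Q, A.init qI ≠ 0 ∧ A.final qF ≠ 0 ∧
    r = ⟨BHNT.start, [Sum.inr (BHNT.trip qI (BHSym.nt G.start) qF)],
         A.init qI * A.final qF⟩}

/-- The original (Bar-Hillel / Nederhof–Satta) intersection grammar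
(schemas (a), (d), (e), (f)). -/
def OBHGrammar (G : WCFG T N K) (A : WFSA T Q K) : WCFG T (BHNT T N Q) K :=
  ⟨BHNT.start,
    obhRulesStart G A ∪ bhRulesCFG G A ∪ bhRulesNil G A ∪ bhRulesArc G A⟩

end BarHillel

/-- Leftmost derivations read off a stack: a terminal on top is emitted, a nonterminal on top is
rewritten. -/
inductive StackDerives {T N K : Type*} (G : WCFG T N K) :
    List (T ⊕ N) → List (Rule T N K) → List T → Prop
  | nil : StackDerives G [] [] []
  | term {a : T} {β rs x} : StackDerives G β rs x → StackDerives G (Sum.inl a :: β) rs (a :: x)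
  | nt {r : Rule T N K} {δ rs x} : r ∈ G.rules → StackDerives G (r.rhs ++ δ) rs x →
      StackDerives G (Sum.inr r.lhs :: δ) (r :: rs) x

section Derivations

variable {T N K : Type*} {G : WCFG T N K}

theorem stackDerives_map_inl_append_iff {z : List T} {β : List (T ⊕ N)}
    {rs : List (Rule T N K)} {x : List T} :
    StackDerives G (z.map Sum.inl ++ β) rs x ↔ ∃ y, x = z ++ y ∧ StackDerives G β rs y := by
  induction z generalizing x with
  | nil => simp
  | cons a z ih =>
    constructor
    · rintro (_ | h)
      obtain ⟨y, rfl, hy⟩ := ih.1 h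
      exact ⟨y, rfl, hy⟩
    · rintro ⟨y, rfl, hy⟩
      exact .term (ih.2 ⟨y, rfl, hy⟩)

theorem DerivesL.cons_inl {a : T} {β : List (T ⊕ N)} {rs : List (Rule T N K)} {x : List T}
    (h : DerivesL G β rs x) : DerivesL G (Sum.inl a :: β) rs (a :: x) := by
  induction h with
  | refl x => exact .refl (a :: x)
  | step hs _ ih =>
    obtain ⟨hr, z, δ, rfl, rfl⟩ := hs
    exact .step ⟨hr, a :: z, δ, rfl, rfl⟩ ih

theorem derivesL_iff_stackDerives {α : List (T ⊕ N)} {rs : List (Rule T N K)} {x : List T} :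
    DerivesL G α rs x ↔ StackDerives G α rs x := by
  constructor
  · intro h
    induction h with
    | refl x =>
      induction x with
      | nil => exact .nil
      | cons a x ih => exact .term ih
    | step hs _ ih =>
      obtain ⟨hr, z, δ, rfl, rfl⟩ := hs
      rw [List.append_assoc, stackDerives_map_inl_append_iff] at ih
      obtain ⟨y, rfl, hy⟩ := ih
      exact stackDerives_map_inl_append_iff.2 ⟨y, rfl, .nt hr hy⟩
  · intro h
    induction h with
    | nil => exact .refl []
    | term _ ih => exact ih.cons_inl
    | nt hr _ ih => exact .step ⟨hr, [], _, rfl, rfl⟩ ih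

theorem StackDerives.exists_of_cons_inr {X : N} {δ : List (T ⊕ N)} {rs : List (Rule T N K)}
    {x : List T} (h : StackDerives G (Sum.inr X :: δ) rs x) :
    ∃ r rs', rs = r :: rs' ∧ r ∈ G.rules ∧ r.lhs = X ∧ StackDerives G (r.rhs ++ δ) rs' x := by
  cases h with
  | nt hr h => exact ⟨_, _, rfl, hr, rfl, h⟩

end Derivations

section TripRHS

variable {T N Q : Type*}

theorem BHSym.ofSym_injective : Function.Injective (BHSym.ofSym : T ⊕ N → BHSym T N) := by
  rintro (a | a) (b | b) h <;> simp_all [BHSym.ofSym]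

theorem BHSym.ofLab_injective : Function.Injective (BHSym.ofLab : Option T → BHSym T N) := by
  rintro (_ | a) (_ | b) h <;> simp_all [BHSym.ofLab]

theorem tripRHS_injective {q q' : Q} {α α' : List (T ⊕ N)} {qs qs' : List Q}
    (hl : qs.length = α.length) (hl' : qs'.length = α'.length)
    (h : tripRHS q α qs = tripRHS q' α' qs') : α = α' ∧ qs = qs' := by
  induction α generalizing q q' qs α' qs' with
  | nil =>
    cases α' <;> cases qs' <;> simp_all [tripRHS]
  | cons s α ih =>
    cases qs with
    | nil => simp at hl
    | cons p qs =>
      cases α' with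
      | nil => simp [tripRHS] at h
      | cons s' α' =>
        cases qs' with
        | nil => simp at hl'
        | cons p' qs' =>
          simp only [tripRHS, List.cons.injEq, Sum.inr.injEq, BHNT.trip.injEq] at h
          obtain ⟨rfl, rfl⟩ := ih (by simpa using hl) (by simpa using hl') h.2
          exact ⟨by rw [BHSym.ofSym_injective h.1.2.1], by rw [h.1.2.2]⟩

theorem tripRHS_append {q : Q} {α β : List (T ⊕ N)} {qs ps : List Q}
    (hl : qs.length = α.length) :
    tripRHS q (α ++ β) (qs ++ ps) = tripRHS q α qs ++ tripRHS (qs.getLastD q) β ps := by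
  induction α generalizing q qs with
  | nil => cases qs <;> simp_all [tripRHS]
  | cons s α ih =>
    cases qs with
    | nil => simp at hl
    | cons p qs =>
      simp only [List.cons_append, tripRHS, List.getLastD_cons]
      rw [ih (by simpa using hl)]

theorem List.getLastD_append_eq {α : Type*} (l m : List α) (a : α) :
    (l ++ m).getLastD a = m.getLastD (l.getLastD a) := by
  induction l generalizing a with
  | nil => rfl
  | cons b l ih => rw [List.cons_append, List.getLastD_cons, List.getLastD_cons, ih]

end TripRHS

section Joint

variable {T N Q K : Type*}

/-- The Bar-Hillel rule obtained from `r` by annotating it with the states `q, qs`. -/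
def Rule.annotate (r : Rule T N K) (q : Q) (qs : List Q) : Rule T (BHNT T N Q) K :=
  ⟨.trip q (.nt r.lhs) (qs.getLastD q), tripRHS q r.rhs qs, r.wt⟩

/-- The Bar-Hillel rule reading the arc `a`. -/
def Arc.bhRule (N : Type*) (a : Arc T Q K) : Rule T (BHNT T N Q) K :=
  ⟨.trip a.src (.ofLab a.lab) a.dst, a.lab.toList.map Sum.inl, a.wt⟩

/-- The Bar-Hillel rule prefixing an ε-arc to the terminal `t`. -/
def epsPrefixRule (N K : Type*) [One K] (t : T) (q₀ q₁ q₂ : Q) : Rule T (BHNT T N Q) K :=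
  ⟨.trip q₀ (.term t) q₂, [.inr (.trip q₀ .eps q₁), .inr (.trip q₁ (.term t) q₂)], 1⟩

theorem Rule.annotate_injective {r r' : Rule T N K} {q q' : Q} {qs qs' : List Q}
    (hl : qs.length = r.rhs.length) (hl' : qs'.length = r'.rhs.length)
    (h : r.annotate q qs = r'.annotate q' qs') : r = r' ∧ qs = qs' := by
  obtain ⟨l, α, w⟩ := r
  obtain ⟨l', α', w'⟩ := r'
  simp only [Rule.annotate, Rule.mk.injEq, BHNT.trip.injEq, BHSym.nt.injEq] at h
  obtain ⟨rfl, rfl⟩ := tripRHS_injective hl hl' h.2.1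
  simp [h.1.2.1, h.2.2]

theorem Arc.bhRule_injective : Function.Injective (Arc.bhRule N : Arc T Q K → _) := by
  rintro ⟨p, l, w, q⟩ ⟨p', l', w', q'⟩ h
  simp only [Arc.bhRule, Rule.mk.injEq, BHNT.trip.injEq] at h
  have := BHSym.ofLab_injective h.1.2.1
  simp_all

theorem Arc.bhRule_ne_epsPrefixRule [One K] {a : Arc T Q K} {t : T} {q₀ q₁ q₂ : Q} :
    a.bhRule N ≠ epsPrefixRule N K t q₀ q₁ q₂ := by
  intro h
  have := congrArg (fun r => r.rhs.length) h
  rcases a with ⟨_, _ | _, _, _⟩ <;> simp [Arc.bhRule, epsPrefixRule] at this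

/-- `JointDerives G A q α qs Rs rs π x`: the rules `Rs` of the Bar-Hillel grammar derive `x` from
`α` annotated with the states `q, qs`, while simulating the derivation `rs` of `G` from `α` and
the subpath `π` of `A` from `q`. -/
inductive JointDerives [One K] (G : WCFG T N K) (A : WFSA T Q K) :
    Q → List (T ⊕ N) → List Q → List (Rule T (BHNT T N Q) K) → List (Rule T N K) →
      List (Arc T Q K) → List T → Prop
  | nil {q} : JointDerives G A q [] [] [] [] [] []
  | nt {q p X R δ qs ps Rs π x} {r : Rule T N K} {rs : List (Rule T N K)} :
      r ∈ G.rules → X = r.lhs → p = ps.getLastD q → R = r.annotate q ps →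
      ps.length = r.rhs.length → JointDerives G A q (r.rhs ++ δ) (ps ++ qs) Rs rs π x →
      JointDerives G A q (.inr X :: δ) (p :: qs) (R :: Rs) (r :: rs) π x
  | eps {q p t R R' δ qs Rs rs π x} {a : Arc T Q K} :
      a ∈ A.arcs → a.lab = none → q = a.src → R = epsPrefixRule N K t q a.dst p →
      R' = a.bhRule N → JointDerives G A a.dst (.inl t :: δ) (p :: qs) Rs rs π x →
      JointDerives G A q (.inl t :: δ) (p :: qs) (R :: R' :: Rs) rs (a :: π) x
  | term {q p t R δ qs Rs rs π x} {a : Arc T Q K} :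
      a ∈ A.arcs → a.lab = some t → q = a.src → p = a.dst → R = a.bhRule N →
      JointDerives G A a.dst δ qs Rs rs π x →
      JointDerives G A q (.inl t :: δ) (p :: qs) (R :: Rs) rs (a :: π) (t :: x)

/-- The last arc of the list, if there is one, is not an ε-arc. -/
def NotEpsEnding (π : List (Arc T Q K)) : Prop :=
  ¬ ∃ a : Arc T Q K, π.getLast? = some a ∧ a.lab = none

theorem NotEpsEnding.tail {a : Arc T Q K} {π : List (Arc T Q K)} (h : NotEpsEnding (a :: π)) :
    NotEpsEnding π := by
  rintro ⟨b, hb, hl⟩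
  exact h ⟨b, by simp [List.getLast?_cons, hb], hl⟩

theorem NotEpsEnding.cons_of_ne_nil {a : Arc T Q K} {π : List (Arc T Q K)}
    (h : NotEpsEnding π) (hne : π ≠ []) : NotEpsEnding (a :: π) := by
  rintro ⟨b, hb, hl⟩
  obtain ⟨c, π, rfl⟩ := List.exists_cons_of_ne_nil hne
  exact h ⟨b, by simpa [List.getLast?_cons] using hb, hl⟩

theorem NotEpsEnding.cons_of_lab {a : Arc T Q K} {t : T} {π : List (Arc T Q K)}
    (h : NotEpsEnding π) (ha : a.lab = some t) : NotEpsEnding (a :: π) := by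
  by_cases hne : π = []
  · subst hne
    rintro ⟨b, hb, hl⟩
    simp at hb
    simp_all
  · exact h.cons_of_ne_nil hne

theorem NotEpsEnding.eq_nil {π : List (Arc T Q K)} (h : NotEpsEnding π)
    (hy : π.filterMap Arc.lab = []) : π = [] := by
  by_contra hne
  rw [List.filterMap_eq_nil_iff] at hy
  exact h ⟨π.getLast hne, List.getLast?_eq_getLast_of_ne_nil hne, hy _ (List.getLast_mem hne)⟩

namespace JointDerives

section One

variable [One K] {G : WCFG T N K} {A : WFSA T Q K} {q : Q} {α : List (T ⊕ N)} {qs qs' : List Q}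
  {Rs Rs' : List (Rule T (BHNT T N Q) K)} {rs rs' : List (Rule T N K)}
  {π π' : List (Arc T Q K)} {x x' : List T}

theorem length_eq (h : JointDerives G A q α qs Rs rs π x) : qs.length = α.length := by
  induction h with
  | nil => rfl
  | nt _ _ _ _ hl _ ih => simp_all
  | eps _ _ _ _ _ _ ih => simpa using ih
  | term _ _ _ _ _ _ ih => simpa using ih

theorem stackDerives (h : JointDerives G A q α qs Rs rs π x) : StackDerives G α rs x := by
  induction h with
  | nil => exact .nil
  | nt hr hX _ _ _ _ ih => subst hX; exact .nt hr ih
  | eps _ _ _ _ _ _ ih => exact ih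
  | term _ _ _ _ _ _ ih => exact .term ih

theorem chainFrom (h : JointDerives G A q α qs Rs rs π x) :
    ChainFrom A q π (qs.getLastD q) := by
  induction h with
  | nil => exact .nil _
  | nt _ _ hp _ _ _ ih =>
    rwa [List.getLastD_append_eq, ← hp, ← List.getLastD_cons] at ih
  | eps ha _ hq _ _ _ ih =>
    subst hq
    rw [List.getLastD_cons] at ih ⊢
    exact .cons ha ih
  | term ha _ hq hp _ _ ih =>
    subst hq hp
    rw [List.getLastD_cons]
    exact .cons ha ih

theorem filterMap_lab (h : JointDerives G A q α qs Rs rs π x) : π.filterMap Arc.lab = x := by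
  induction h with
  | nil => rfl
  | nt _ _ _ _ _ _ ih => exact ih
  | eps _ hl _ _ _ _ ih => simpa [hl] using ih
  | term _ hl _ _ _ _ ih => simpa [hl] using ih

theorem notEpsEnding (h : JointDerives G A q α qs Rs rs π x) : NotEpsEnding π := by
  induction h with
  | nil => simp [NotEpsEnding]
  | nt _ _ _ _ _ _ ih => exact ih
  | eps _ _ _ _ _ h ih => exact ih.cons_of_ne_nil (by cases h <;> simp)
  | term _ hl _ _ _ _ ih => exact ih.cons_of_lab hl

theorem right_unique (h : JointDerives G A q α qs Rs rs π x)
    (h' : JointDerives G A q α qs Rs rs' π' x') : rs = rs' ∧ π = π' := by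
  induction h generalizing rs' π' x' with
  | nil => cases h'; simp
  | nt _ _ _ hR hl _ ih =>
    cases h' with
    | nt _ _ _ hR' hl' h' =>
      obtain ⟨rfl, rfl⟩ := Rule.annotate_injective hl hl' (hR.symm.trans hR')
      simp [ih h']
  | eps _ _ _ hR hR' _ ih =>
    cases h' with
    | eps _ _ _ _ hR'' h' =>
      obtain rfl := Arc.bhRule_injective (hR'.symm.trans hR'')
      simp [ih h']
    | term _ _ _ _ hR'' _ => exact (Arc.bhRule_ne_epsPrefixRule (hR''.symm.trans hR)).elim
  | term _ _ _ _ hR _ ih =>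
    cases h' with
    | eps _ _ _ hR' _ _ => exact (Arc.bhRule_ne_epsPrefixRule (hR.symm.trans hR')).elim
    | term _ _ _ _ hR' h' =>
      obtain rfl := Arc.bhRule_injective (hR.symm.trans hR')
      simp [ih h']

theorem left_unique (h : JointDerives G A q α qs Rs rs π x)
    (h' : JointDerives G A q α qs' Rs' rs π x') : qs = qs' ∧ Rs = Rs' := by
  induction h generalizing qs' Rs' x' with
  | nil => cases h'; simp
  | nt _ _ hp hR hl _ ih =>
    cases h' with
    | nt _ _ hp' hR' hl' h' =>
      obtain ⟨he, rfl⟩ := ih h'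
      obtain ⟨rfl, rfl⟩ := List.append_inj he (hl.trans hl'.symm)
      simp [hp, hp', hR, hR']
  | eps _ hl _ hR hR' _ ih =>
    cases h' with
    | eps _ _ _ hS hS' h' =>
      obtain ⟨he, rfl⟩ := ih h'
      obtain ⟨rfl, rfl⟩ := List.cons.inj he
      simp [hR, hR', hS, hS']
    | term _ hl' => simp [hl] at hl'
  | term _ hl _ hp hR _ ih =>
    cases h' with
    | eps _ hl' => simp [hl] at hl'
    | term _ _ _ hp' hR' h' =>
      obtain ⟨rfl, rfl⟩ := ih h'
      simp [hp, hp', hR, hR']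

theorem exists_of_stackDerives_of_chainFrom {p : Q} (h : StackDerives G α rs x)
    (hπ : ChainFrom A q π p) (hy : π.filterMap Arc.lab = x) (hne : NotEpsEnding π) :
    ∃ qs Rs, JointDerives G A q α qs Rs rs π x ∧ qs.getLastD q = p := by
  induction h generalizing q π with
  | nil =>
    obtain rfl := hne.eq_nil hy
    cases hπ
    exact ⟨[], [], .nil, rfl⟩
  | @nt r δ _ _ hr _ ih =>
    obtain ⟨qs, Rs, hJ, rfl⟩ := ih hπ hy hne
    have hlen : (qs.take r.rhs.length).length = r.rhs.length := by
      have := hJ.length_eq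
      simp_all
    refine ⟨(qs.take r.rhs.length).getLastD q :: qs.drop r.rhs.length, _,
      .nt hr rfl rfl rfl hlen (by rwa [List.take_append_drop]), ?_⟩
    rw [List.getLastD_cons, ← List.getLastD_append_eq, List.take_append_drop]
  | @term t δ _ x _ ih =>
    induction hπ with
    | nil => simp at hy
    | @cons a π p ha hπ ihπ =>
      rcases hl : a.lab with _ | t'
      · obtain ⟨qs, Rs, hJ, rfl⟩ := ihπ ih (by simpa [hl] using hy) hne.tail
        cases qs with
        | nil => simpa using hJ.length_eq
        | cons p qs =>
          exact ⟨_, _, .eps ha hl rfl rfl rfl hJ, by simp only [List.getLastD_cons]⟩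
      · simp only [List.filterMap_cons, hl, List.cons.injEq] at hy
        obtain ⟨rfl, hy⟩ := hy
        obtain ⟨qs, Rs, hJ, rfl⟩ := ih hπ hy hne.tail
        exact ⟨_, _, .term ha hl rfl rfl rfl hJ, List.getLastD_cons⟩

end One

variable [CommSemiring K] {G : WCFG T N K} {A : WFSA T Q K} {q : Q} {α : List (T ⊕ N)}
  {qs : List Q} {Rs : List (Rule T (BHNT T N Q) K)} {rs : List (Rule T N K)}
  {π : List (Arc T Q K)} {x : List T}

theorem prod_wt (h : JointDerives G A q α qs Rs rs π x) :
    (Rs.map Rule.wt).prod = (rs.map Rule.wt).prod * (π.map Arc.wt).prod := by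
  induction h with
  | nil => simp
  | nt _ _ _ hR _ _ ih => simp [hR, ih, Rule.annotate, mul_assoc]
  | eps _ _ _ hR hR' _ ih =>
    simp [hR, hR', ih, epsPrefixRule, Arc.bhRule, mul_left_comm]
  | term _ _ _ _ hR _ ih => simp [hR, ih, Arc.bhRule, mul_left_comm]

end JointDerives

section BarHillelGrammar

variable [CommSemiring K] {G : WCFG T N K} {A : WFSA T Q K}

theorem annotate_mem_BHGrammar {r : Rule T N K} (hr : r ∈ G.rules) {q : Q} {qs : List Q}
    (hl : qs.length = r.rhs.length) : r.annotate q qs ∈ (BHGrammar G A).rules := by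
  by_cases hn : r.rhs = []
  · obtain rfl : qs = [] := by simpa [hn] using hl
    refine Or.inl (Or.inl (Or.inr ⟨r, q, hr, hn, ?_⟩))
    simp [Rule.annotate, hn, tripRHS]
  · exact Or.inl (Or.inl (Or.inl (Or.inr ⟨r, q, qs, hr, hn, hl, rfl⟩)))

theorem bhRule_mem_BHGrammar {a : Arc T Q K} (ha : a ∈ A.arcs) :
    a.bhRule N ∈ (BHGrammar G A).rules :=
  Or.inl (Or.inr ⟨a, ha, rfl⟩)

theorem epsPrefixRule_mem_BHGrammar {t : T} {q₀ q₁ q₂ : Q} :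
    epsPrefixRule N K t q₀ q₁ q₂ ∈ (BHGrammar G A).rules :=
  Or.inr ⟨t, q₀, q₁, q₂, rfl⟩

theorem exists_annotate_of_mem {R : Rule T (BHNT T N Q) K} (hR : R ∈ (BHGrammar G A).rules)
    {q p : Q} {X : N} (hl : R.lhs = .trip q (.nt X) p) :
    ∃ r ∈ G.rules, ∃ ps : List Q, ps.length = r.rhs.length ∧ X = r.lhs ∧
      p = ps.getLastD q ∧ R = r.annotate q ps := by
  rcases hR with (((((⟨_, _, _, _, rfl⟩ | ⟨_, _, _, _, rfl⟩) | ⟨_, _, _, rfl⟩) |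
    ⟨r, q', ps, hr, _, hps, rfl⟩) | ⟨r, q', hr, hn, rfl⟩) | ⟨a, _, rfl⟩) | ⟨_, _, _, _, rfl⟩
  · simp at hl
  · simp at hl
  · simp at hl
  · simp only [BHNT.trip.injEq, BHSym.nt.injEq] at hl
    obtain ⟨rfl, rfl, rfl⟩ := hl
    exact ⟨r, hr, ps, hps, rfl, rfl, rfl⟩
  · simp only [BHNT.trip.injEq, BHSym.nt.injEq] at hl
    obtain ⟨rfl, rfl, rfl⟩ := hl
    exact ⟨r, hr, [], by simp [hn], rfl, rfl, by simp [Rule.annotate, hn, tripRHS]⟩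
  · rcases a with ⟨_, _ | _, _, _⟩ <;> simp [BHSym.ofLab] at hl
  · simp at hl

theorem exists_bhRule_or_epsPrefixRule_of_mem {R : Rule T (BHNT T N Q) K}
    (hR : R ∈ (BHGrammar G A).rules) {q p : Q} {t : T} (hl : R.lhs = .trip q (.term t) p) :
    (∃ a ∈ A.arcs, a.lab = some t ∧ q = a.src ∧ p = a.dst ∧ R = a.bhRule N) ∨
      ∃ q', R = epsPrefixRule N K t q q' p := by
  rcases hR with (((((⟨_, _, _, _, rfl⟩ | ⟨_, _, _, _, rfl⟩) | ⟨_, _, _, rfl⟩) |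
    ⟨r, q', ps, hr, _, hps, rfl⟩) | ⟨r, q', hr, hn, rfl⟩) | ⟨a, ha, rfl⟩) | ⟨_, _, _, _, rfl⟩
  · simp at hl
  · simp at hl
  · simp at hl
  · simp at hl
  · simp at hl
  · simp only [BHNT.trip.injEq] at hl
    exact Or.inl ⟨a, ha, BHSym.ofLab_injective hl.2.1, hl.1.symm, hl.2.2.symm, rfl⟩
  · simp only [BHNT.trip.injEq, BHSym.term.injEq] at hl
    obtain ⟨rfl, rfl, rfl⟩ := hl
    exact Or.inr ⟨_, rfl⟩

theorem exists_bhRule_of_mem {R : Rule T (BHNT T N Q) K}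
    (hR : R ∈ (BHGrammar G A).rules) {q p : Q} (hl : R.lhs = .trip q .eps p) :
    ∃ a ∈ A.arcs, a.lab = none ∧ q = a.src ∧ p = a.dst ∧ R = a.bhRule N := by
  rcases hR with (((((⟨_, _, _, _, rfl⟩ | ⟨_, _, _, _, rfl⟩) | ⟨_, _, _, rfl⟩) |
    ⟨r, q', ps, hr, _, hps, rfl⟩) | ⟨r, q', hr, hn, rfl⟩) | ⟨a, ha, rfl⟩) | ⟨_, _, _, _, rfl⟩
  · simp at hl
  · simp at hl
  · simp at hl
  · simp at hl
  · simp at hl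
  · simp only [BHNT.trip.injEq] at hl
    exact ⟨a, ha, BHSym.ofLab_injective hl.2.1, hl.1.symm, hl.2.2.symm, rfl⟩
  · simp at hl

theorem JointDerives.stackDerives_BHGrammar {q : Q} {α : List (T ⊕ N)} {qs : List Q}
    {Rs : List (Rule T (BHNT T N Q) K)} {rs : List (Rule T N K)} {π : List (Arc T Q K)}
    {x : List T} (h : JointDerives G A q α qs Rs rs π x) :
    StackDerives (BHGrammar G A) (tripRHS q α qs) Rs x := by
  induction h with
  | nil => exact .nil
  | nt hr hX hp hR hl _ ih =>
    subst hX hp hR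
    rw [tripRHS_append hl] at ih
    exact .nt (annotate_mem_BHGrammar hr hl) ih
  | @eps q p t R R' δ qs Rs rs π x a ha hl hq hR hR' _ ih =>
    subst hR hR' hq
    refine .nt (r := epsPrefixRule N K t a.src a.dst p) epsPrefixRule_mem_BHGrammar ?_
    have key := StackDerives.nt (bhRule_mem_BHGrammar (G := G) ha)
      (δ := tripRHS a.dst (.inl t :: δ) (p :: qs)) (rs := Rs) (x := x)
      (by simpa [Arc.bhRule, hl] using ih)
    simpa [Arc.bhRule, hl, BHSym.ofLab, epsPrefixRule, tripRHS, BHSym.ofSym] using key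
  | @term q p t R δ qs Rs rs π x a ha hl hq hp hR _ ih =>
    subst hR hq hp
    have key := StackDerives.nt (bhRule_mem_BHGrammar (G := G) ha)
      (δ := tripRHS a.dst δ qs) (rs := Rs) (x := t :: x)
      (by simpa [Arc.bhRule, hl] using StackDerives.term ih)
    simpa [Arc.bhRule, hl, BHSym.ofLab, tripRHS, BHSym.ofSym] using key

theorem StackDerives.exists_jointDerives {q : Q} {α : List (T ⊕ N)} {qs : List Q}
    {Rs : List (Rule T (BHNT T N Q) K)} {x : List T} (hlen : qs.length = α.length)
    (h : StackDerives (BHGrammar G A) (tripRHS q α qs) Rs x) :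
    ∃ rs π, JointDerives G A q α qs Rs rs π x := by
  induction hn : Rs.length using Nat.strong_induction_on generalizing q α qs Rs x with
  | _ n ih =>
    subst hn
    rcases α with _ | ⟨t | X, α⟩ <;> rcases qs with _ | ⟨p, qs⟩ <;>
      simp at hlen
    · cases h
      exact ⟨_, _, .nil⟩
    · obtain ⟨R, Rs, rfl, hR, hl, hd⟩ := h.exists_of_cons_inr
      rcases exists_bhRule_or_epsPrefixRule_of_mem hR hl with
        ⟨a, ha, hlab, rfl, rfl, rfl⟩ | ⟨q', rfl⟩
      · simp only [Arc.bhRule, hlab, Option.toList_some, List.map_cons, List.map_nil,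
          List.cons_append, List.nil_append] at hd
        cases hd with
        | term hd =>
          obtain ⟨rs, π, hJ⟩ := ih Rs.length (by simp) hlen hd rfl
          exact ⟨_, _, .term ha hlab rfl rfl rfl hJ⟩
      · obtain ⟨R', Rs, rfl, hR', hl', hd'⟩ := hd.exists_of_cons_inr
        obtain ⟨a, ha, hlab, rfl, rfl, rfl⟩ := exists_bhRule_of_mem hR' hl'
        obtain ⟨rs, π, hJ⟩ := ih Rs.length (by simp) (q := a.dst) (α := .inl t :: α)
          (qs := p :: qs) (by simpa using hlen)
          (by simpa [Arc.bhRule, hlab, tripRHS, BHSym.ofSym] using hd') rfl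
        exact ⟨_, _, .eps ha hlab rfl rfl rfl hJ⟩
    · obtain ⟨R, Rs, rfl, hR, hl, hd⟩ := h.exists_of_cons_inr
      obtain ⟨r, hr, ps, hps, rfl, rfl, rfl⟩ := exists_annotate_of_mem hR hl
      obtain ⟨rs, π, hJ⟩ := ih Rs.length (by simp) (q := q) (α := r.rhs ++ α) (qs := ps ++ qs)
        (by simp [hps, hlen]) (by rw [tripRHS_append hps]; exact hd) rfl
      exact ⟨_, _, .nt hr rfl rfl rfl hps hJ⟩

end BarHillelGrammar

end Joint

theorem DerivFrom.ext_rules {T N K : Type*} {G : WCFG T N K} {α : List (T ⊕ N)}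
    {d d' : DerivFrom G α} (h : d.rules = d'.rules) (hy : d.yield = d'.yield) : d = d' := by
  cases d; cases d'; simp_all

theorem SubPath.ext_arcs {T Q K : Type*} {A : WFSA T Q K} {p q : Q} {π π' : SubPath A p q}
    (h : π.arcs = π'.arcs) : π = π' := by
  cases π; cases π'; simp_all

/-- **Lemma B.1.**  For any triplet nonterminal `(q₀, X, q_m)` of the
generalized Bar-Hillel grammar `G∩` with `X ∈ N ∪ Σ` (so in particular
`X ≠ S̄`), there is a bijection `ψ` from the subderivations of `G∩` rooted at
`(q₀, X, q_m)` to the weighted join of the subderivations of `G` rooted at `X`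
with the subpaths of `A` from `q₀` to `q_m`, restricted to pairs whose subpath
does not end with an ε-arc; `ψ` preserves yields, and the weight of a
subderivation of `G∩` is the `⊗`-product of the weights of the corresponding
subderivation and subpath. -/
theorem bar_hillel_triplet_bijection
    {T N Q K : Type*} [CommSemiring K] [Finite N] [Finite Q]
    (G : WCFG T N K) (A : WFSA T Q K) (hGfin : G.rules.Finite)
    (q0 qm : Q) (X : BHSym T N)
    (hX : (∃ Y, X = BHSym.nt Y) ∨ (∃ a, X = BHSym.term a)) :
    ∃ ψ : Deriv (BHGrammar G A) (BHNT.trip q0 X qm) →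
        {p : SubDeriv G X × SubPath A q0 qm //
          p.1.yield = p.2.yield ∧
          ¬ ∃ a : Arc T Q K, p.2.arcs.getLast? = some a ∧ a.lab = none},
      Function.Bijective ψ ∧
      ∀ d, (ψ d).1.1.yield = d.yield ∧ (ψ d).1.2.yield = d.yield ∧
        d.weight = (ψ d).1.1.weight * (ψ d).1.2.weight := by
  obtain ⟨s, rfl, hform⟩ : ∃ s : T ⊕ N, X = BHSym.ofSym s ∧ (BHSym.ofSym s).form = [s] := by
    rcases hX with ⟨Y, rfl⟩ | ⟨a, rfl⟩
    · exact ⟨.inr Y, rfl, rfl⟩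
    · exact ⟨.inl a, rfl, rfl⟩
  have hex (d : Deriv (BHGrammar G A) (BHNT.trip q0 (BHSym.ofSym s) qm)) :
      ∃ rs π, JointDerives G A q0 [s] [qm] d.rules rs π d.yield :=
    StackDerives.exists_jointDerives rfl (derivesL_iff_stackDerives.1 d.ok)
  choose rs π hJ using hex
  refine ⟨fun d => ⟨⟨⟨rs d, d.yield, ?_⟩, ⟨π d, (hJ d).chainFrom⟩⟩, (hJ d).filterMap_lab.symm,
    (hJ d).notEpsEnding⟩, ⟨fun d d' h => ?_, fun ⟨⟨t, p⟩, hy, hne⟩ => ?_⟩,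
    fun d => ⟨rfl, (hJ d).filterMap_lab, (hJ d).prod_wt⟩⟩
  · rw [hform]
    exact derivesL_iff_stackDerives.2 (hJ d).stackDerives
  · have hrs : rs d = rs d' := congrArg (fun p => p.1.1.rules) h
    have hy : d.yield = d'.yield := congrArg (fun p => p.1.1.yield) h
    have hπ : π d = π d' := congrArg (fun p => p.1.2.arcs) h
    have hJ' := hJ d'
    rw [← hrs, ← hπ] at hJ'
    exact DerivFrom.ext_rules ((hJ d).left_unique hJ').2 hy
  · have ht : StackDerives G [s] t.rules t.yield :=
      derivesL_iff_stackDerives.1 (hform ▸ t.ok)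
    obtain ⟨qs, Rs, h, hq⟩ :=
      JointDerives.exists_of_stackDerives_of_chainFrom ht p.ok hy.symm hne
    obtain ⟨q, rfl⟩ := List.length_eq_one_iff.1 h.length_eq
    obtain rfl : q = qm := by simpa using hq
    let d : Deriv (BHGrammar G A) (BHNT.trip q0 (BHSym.ofSym s) q) :=
      ⟨Rs, t.yield, derivesL_iff_stackDerives.2 h.stackDerives_BHGrammar⟩
    obtain ⟨hrs, hπ⟩ := (hJ d).right_unique h
    exact ⟨d, Subtype.ext (Prod.ext (DerivFrom.ext_rules hrs rfl) (SubPath.ext_arcs hπ))⟩
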